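/- arXiv:1810.01315 — 2 statements merged into one kernel-verified Lean document; each statement's English description precedes it below -/
import Mathlib

section
/- A map 𝔬 : 𝕆 → 𝕆 is an order-preserving homeomorphism of the lexicographically ordered square if and only if there exist an order-preserving homeomorphism θ : I → I and a family (μ_s)_{s ∈ I} of order-preserving homeomorphisms μ_s : I → I such that 𝔬(s,t) = (θ(s), μ_s(t)) for all (s,t) ∈ I × I. -/
open Set

/-- The unit interval `[0,1]`. -/
local notation "𝕀" => unitInterval

/-- The lexicographic order on `[0,1] × [0,1]`:
`(x,y) ≤ (s,t)` iff `x < s`, or `x = s` and `y ≤ t`. -/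
def lexLE (p q : 𝕀 × 𝕀) : Prop := p.1 < q.1 ∨ (p.1 = q.1 ∧ p.2 ≤ q.2)

/-- The strict lexicographic order on `[0,1] × [0,1]`. -/
def lexLT (p q : 𝕀 × 𝕀) : Prop := p.1 < q.1 ∨ (p.1 = q.1 ∧ p.2 < q.2)

/-- The order topology of the lexicographic order on `[0,1] × [0,1]`, generated by the
open rays. -/
def lexTop : TopologicalSpace (𝕀 × 𝕀) :=
  TopologicalSpace.generateFrom
    ({S | ∃ a, S = {x | lexLT a x}} ∪ {S | ∃ a, S = {x | lexLT x a}})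

theorem lexLE_of_lexLT {p q : 𝕀 × 𝕀} (h : lexLT p q) : lexLE p q := by
  rcases h with h | ⟨h, h'⟩
  · exact Or.inl h
  · exact Or.inr ⟨h, h'.le⟩

theorem lexLT_iff (p q : 𝕀 × 𝕀) : lexLT p q ↔ ¬ lexLE q p := by
  unfold lexLT lexLE
  rcases lt_trichotomy p.1 q.1 with h | h | h
  · simp [h, h.not_gt, h.ne']
  · simp [h]
  · simp [h, h.not_gt, h.ne']

theorem lexLE_antisymm {p q : 𝕀 × 𝕀} (h : lexLE p q) (h' : lexLE q p) : p = q := by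
  rcases h with h | ⟨h, k⟩ <;> rcases h' with h' | ⟨h', k'⟩
  · exact absurd h h'.not_gt
  · exact absurd h' h.ne'
  · exact absurd h h'.ne'
  · exact Prod.ext h (le_antisymm k k')

theorem lexLE_fst {p q : 𝕀 × 𝕀} (h : lexLE p q) : p.1 ≤ q.1 := by
  rcases h with h | ⟨h, k⟩
  · exact h.le
  · exact h.le

theorem lexLE_snd {p q : 𝕀 × 𝕀} (h : lexLE p q) (e : p.1 = q.1) : p.2 ≤ q.2 := by
  rcases h with h | ⟨h, k⟩
  · exact absurd e h.ne
  · exact k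

theorem fiber_aux (f : 𝕀 × 𝕀 → 𝕀 × 𝕀) (hi : Function.Injective f)
    (hm : ∀ x y, lexLE x y → lexLE (f x) (f y)) (a b : 𝕀 × 𝕀)
    (hab : (f a).1 = (f b).1) : ¬ a.1 < b.1 := by
  intro hlt
  have key : ∀ z ∈ Ioo a.1 b.1, ∀ t, (f (z, t)).1 = (f a).1 := by
    intro z hz t
    apply le_antisymm
    · rw [hab]; exact lexLE_fst (hm _ _ (Or.inl hz.2))
    · exact lexLE_fst (hm _ _ (Or.inl hz.1))
  have hq : ∀ z : 𝕀, ∃ q : ℚ, z ∈ Ioo a.1 b.1 →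
      ((f (z, 0)).2 : ℝ) < q ∧ (q : ℝ) < (f (z, 1)).2 := by
    intro z
    by_cases hz : z ∈ Ioo a.1 b.1
    · have h1 : (f (z, 0)).1 = (f (z, 1)).1 := by rw [key z hz, key z hz]
      have h2 : (f (z, 0)).2 ≤ (f (z, 1)).2 :=
        lexLE_snd (hm _ _ (Or.inr ⟨rfl, zero_le_one⟩)) h1
      have h3 : (f (z, 0)).2 ≠ (f (z, 1)).2 := by
        intro h
        have := hi (Prod.ext h1 h)
        simp at this
      have h4 : ((f (z, 0)).2 : ℝ) < (f (z, 1)).2 :=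
        Subtype.coe_lt_coe.2 (lt_of_le_of_ne h2 h3)
      obtain ⟨q, h5, h6⟩ := exists_rat_btwn h4
      exact ⟨q, fun _ => ⟨h5, h6⟩⟩
    · exact ⟨0, fun h => absurd h hz⟩
  choose q hq using hq
  have hmono : ∀ z ∈ Ioo a.1 b.1, ∀ w ∈ Ioo a.1 b.1, z < w → q z < q w := by
    intro z hz w hw hzw
    have h1 : (f (z, 1)).1 = (f (w, 0)).1 := by rw [key z hz, key w hw]
    have h2 : ((f (z, 1)).2 : ℝ) ≤ (f (w, 0)).2 := lexLE_snd (hm _ _ (Or.inl hzw)) h1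
    have h3 := (hq z hz).2
    have h4 := (hq w hw).1
    have : (q z : ℝ) < q w := by linarith
    exact_mod_cast this
  have hinj : InjOn q (Ioo a.1 b.1) := by
    intro z hz w hw h
    rcases lt_trichotomy z w with k | k | k
    · exact absurd h (hmono z hz w hw k).ne
    · exact k
    · exact absurd h (hmono w hw z hz k).ne'
  have hc : (Ioo a.1 b.1).Countable :=
    (mapsTo_univ q _).countable_of_injOn hinj (to_countable _)
  have hc2 : (Ioo (a.1 : ℝ) (b.1 : ℝ)).Countable := by
    refine (hc.image Subtype.val).mono ?_
    intro x hx
    exact ⟨⟨x, a.1.2.1.trans hx.1.le, hx.2.le.trans b.1.2.2⟩, ⟨hx.1, hx.2⟩, rfl⟩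
  have hlt' : (a.1 : ℝ) < b.1 := hlt
  have := Cardinal.Real.Ioo_countable_iff.1 hc2
  exact absurd hlt' this.not_gt

theorem fiber_eq (f : 𝕀 × 𝕀 → 𝕀 × 𝕀) (hi : Function.Injective f)
    (hm : ∀ x y, lexLE x y → lexLE (f x) (f y)) (a b : 𝕀 × 𝕀)
    (hab : (f a).1 = (f b).1) : a.1 = b.1 :=
  le_antisymm (not_lt.1 (fiber_aux f hi hm b a hab.symm)) (not_lt.1 (fiber_aux f hi hm a b hab))

theorem inv_mono (e : 𝕀 × 𝕀 ≃ 𝕀 × 𝕀) (hm : ∀ x y, lexLE x y → lexLE (e x) (e y)) :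
    ∀ x y, lexLE x y → lexLE (e.symm x) (e.symm y) := by
  intro x y h
  by_contra hc
  have h1 := hm _ _ (lexLE_of_lexLT ((lexLT_iff _ _).2 hc))
  simp only [Equiv.apply_symm_apply] at h1
  have := lexLE_antisymm h h1
  subst this
  exact hc (Or.inr ⟨rfl, le_rfl⟩)

theorem lex_continuous (e : 𝕀 × 𝕀 ≃ 𝕀 × 𝕀) (hm : ∀ x y, lexLE x y → lexLE (e x) (e y)) :
    @Continuous _ _ lexTop lexTop e := by
  have hs := inv_mono e hm
  have hle : ∀ x y, lexLE (e x) y ↔ lexLE x (e.symm y) := fun x y =>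
    ⟨fun h => by simpa using hs _ _ h, fun h => by simpa using hm _ _ h⟩
  have hge : ∀ x y, lexLE y (e x) ↔ lexLE (e.symm y) x := fun x y =>
    ⟨fun h => by simpa using hs _ _ h, fun h => by simpa using hm _ _ h⟩
  refine (@continuous_generateFrom_iff _ _ _ lexTop _).2 ?_
  rintro S (⟨a, rfl⟩ | ⟨a, rfl⟩)
  · refine TopologicalSpace.isOpen_generateFrom_of_mem (Or.inl ⟨e.symm a, ?_⟩)
    ext x
    simp [lexLT_iff, hle]
  · refine TopologicalSpace.isOpen_generateFrom_of_mem (Or.inr ⟨e.symm a, ?_⟩)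
    ext x
    simp [lexLT_iff, hge]

/-- A monotone bijection of the unit interval as a homeomorphism. -/
noncomputable def homeoOfMono (e : 𝕀 ≃ 𝕀) (h : Monotone e) (h' : Monotone e.symm) : 𝕀 ≃ₜ 𝕀 :=
  (e.toOrderIso h h').toHomeomorph

/-- `f` is an order-preserving self-homeomorphism of the lexicographically ordered
square iff there are an order-preserving homeomorphism `θ` of `[0,1]` (with its
Euclidean topology) and a family `μ` of order-preserving homeomorphisms of `[0,1]`
with `f (s,t) = (θ s, μ s t)`. -/
theorem lex_square_orderPreserving_homeomorph_iff (f : 𝕀 × 𝕀 → 𝕀 × 𝕀) :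
    ((∃ 𝔬 : @Homeomorph (𝕀 × 𝕀) (𝕀 × 𝕀) lexTop lexTop, ⇑𝔬 = f) ∧
      ∀ x y, lexLE x y → lexLE (f x) (f y)) ↔
    (∃ (θ : 𝕀 ≃ₜ 𝕀) (μ : 𝕀 → 𝕀 ≃ₜ 𝕀), Monotone ⇑θ ∧ (∀ s : 𝕀, Monotone ⇑(μ s)) ∧
      ∀ s t : 𝕀, f (s, t) = (θ s, μ s t)) := by
  constructor
  · rintro ⟨⟨o, rfl⟩, hm⟩
    obtain ⟨e, he⟩ : ∃ e : 𝕀 × 𝕀 ≃ 𝕀 × 𝕀, ∀ x, @DFunLike.coe (@Homeomorph (𝕀 × 𝕀) (𝕀 × 𝕀) lexTop lexTop) _ _ _ o x = e x :=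
      ⟨@Homeomorph.toEquiv _ _ lexTop lexTop o, fun _ => rfl⟩
    simp only [he] at hm ⊢
    have hs := inv_mono e hm
    have F := fiber_eq e e.injective hm
    have G := fiber_eq e.symm e.symm.injective hs
    have G' : ∀ a b : 𝕀 × 𝕀, a.1 = b.1 → (e a).1 = (e b).1 := fun a b h =>
      G _ _ (by simpa using h)
    have F' : ∀ a b : 𝕀 × 𝕀, a.1 = b.1 → (e.symm a).1 = (e.symm b).1 := fun a b h =>
      F _ _ (by simpa using h)
    let θe : 𝕀 ≃ 𝕀 :=
      { toFun := fun s => (e (s, 0)).1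
        invFun := fun s => (e.symm (s, 0)).1
        left_inv := fun s => by
          have := F' ((e (s, 0)).1, 0) (e (s, 0)) rfl
          simpa using this
        right_inv := fun s => by
          have := G' ((e.symm (s, 0)).1, 0) (e.symm (s, 0)) rfl
          simpa using this }
    have hθ : Monotone θe := fun s t h => lexLE_fst (hm _ _ (by
      rcases h.lt_or_eq with h | h
      · exact Or.inl h
      · exact Or.inr ⟨h, le_rfl⟩))
    have hθ' : Monotone θe.symm := fun s t h => lexLE_fst (hs _ _ (by
      rcases h.lt_or_eq with h | h
      · exact Or.inl h
      · exact Or.inr ⟨h, le_rfl⟩))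
    have A : ∀ s t, (e (s, t)).1 = θe s := fun s t => G' _ _ rfl
    have B : ∀ s t, (e.symm (θe s, t)).1 = s := fun s t => by
      have := F' (θe s, t) (e (s, 0)) rfl
      simpa using this
    let μe : 𝕀 → 𝕀 ≃ 𝕀 := fun s =>
      { toFun := fun t => (e (s, t)).2
        invFun := fun t => (e.symm (θe s, t)).2
        left_inv := fun t => by
          have : (θe s, (e (s, t)).2) = e (s, t) := Prod.ext (A s t).symm rfl
          simp only [this, Equiv.symm_apply_apply]
        right_inv := fun t => by
          have : (s, (e.symm (θe s, t)).2) = e.symm (θe s, t) := Prod.ext (B s t).symm rfl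
          simp only [this, Equiv.apply_symm_apply] }
    have hμ : ∀ s, Monotone (μe s) := fun s t u h =>
      lexLE_snd (hm _ _ (Or.inr ⟨rfl, h⟩)) (by rw [A, A])
    have hμ' : ∀ s, Monotone (μe s).symm := fun s t u h =>
      lexLE_snd (hs _ _ (Or.inr ⟨rfl, h⟩)) (by rw [B, B])
    exact ⟨homeoOfMono θe hθ hθ', fun s => homeoOfMono (μe s) (hμ s) (hμ' s), hθ, hμ,
      fun s t => Prod.ext (A s t) rfl⟩
  · rintro ⟨θ, μ, hθ, hμ, hf⟩
    let e : 𝕀 × 𝕀 ≃ 𝕀 × 𝕀 :=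
      { toFun := f
        invFun := fun p => (θ.symm p.1, (μ (θ.symm p.1)).symm p.2)
        left_inv := fun p => by
          obtain ⟨s, t⟩ := p
          simp [hf]
        right_inv := fun p => by
          simp [hf] }
    have hm : ∀ x y, lexLE x y → lexLE (f x) (f y) := by
      rintro ⟨s, t⟩ ⟨u, v⟩ h
      rw [hf, hf]
      rcases h with h | ⟨h, k⟩
      · exact Or.inl (hθ.strictMono_of_injective θ.injective h)
      · dsimp only at h k
        subst h
        exact Or.inr ⟨rfl, hμ _ k⟩
    have hs := inv_mono e hm
    exact ⟨⟨@Homeomorph.mk _ _ lexTop lexTop e (lex_continuous e hm) (lex_continuous e.symm hs), rfl⟩,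
      hm⟩
end

section
/- No group of homeomorphisms of the Alexandroff square acts topologically transitively: for every subgroup G of the homeomorphism group of 𝔸 there exist nonempty open sets U, V ⊆ 𝔸 such that g(U) ∩ V = ∅ for every g ∈ G. -/
open Set

/-- The unit interval `[0,1]` with its Euclidean (subspace) topology. -/
local notation "𝕀" => unitInterval

/-- The generating family for the Alexandroff square topology on `[0,1] × [0,1]`:
sets `{x} × U` with `U` open in `𝕀` and `x ∉ U`, together with sets
`([0,1] × U) \ (F × [0,1])` with `U` open in `𝕀` and `F` finite. -/
def alexBasis : Set (Set (𝕀 × 𝕀)) :=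
  {S | (∃ (x : 𝕀) (U : Set 𝕀), IsOpen U ∧ x ∉ U ∧ S = ({x} : Set 𝕀) ×ˢ U) ∨
       (∃ (U F : Set 𝕀), IsOpen U ∧ F.Finite ∧ S = ((univ : Set 𝕀) ×ˢ U) \ (F ×ˢ (univ : Set 𝕀)))}

/-- The Alexandroff square topology. -/
def alexTop : TopologicalSpace (𝕀 × 𝕀) := TopologicalSpace.generateFrom alexBasis

/-- The group of self-homeomorphisms of a topological space, under composition. -/
instance homeoGroup {X : Type*} [TopologicalSpace X] : Group (X ≃ₜ X) where
  mul f g := g.trans f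
  one := Homeomorph.refl X
  inv := Homeomorph.symm
  mul_assoc _ _ _ := rfl
  one_mul _ := Homeomorph.ext fun _ => rfl
  mul_one _ := Homeomorph.ext fun _ => rfl
  inv_mul_cancel := Homeomorph.self_trans_symm

/-- The Alexandroff square as a type synonym carrying its topology as an instance. -/
def Alx : Type := 𝕀 × 𝕀

instance alxTopInst : TopologicalSpace Alx := alexTop

/-- Inclusion of points. -/
def Alx.mk (x y : 𝕀) : Alx := (x, y)

/-- First coordinate. -/
def Alx.fst (p : Alx) : 𝕀 := Prod.fst p

/-- Second coordinate. -/
def Alx.snd (p : Alx) : 𝕀 := Prod.snd p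

lemma alx_ext {p q : Alx} (h1 : p.fst = q.fst) (h2 : p.snd = q.snd) : p = q := Prod.ext h1 h2

lemma alx_open_col (x : 𝕀) (U : Set 𝕀) (hU : IsOpen U) (hx : x ∉ U) :
    IsOpen {p : Alx | p.fst = x ∧ p.snd ∈ U} := by
  refine TopologicalSpace.isOpen_generateFrom_of_mem (g := alexBasis) (Or.inl ⟨x, U, hU, hx, ?_⟩)
  ext p
  rfl

lemma alx_open_strip (U F : Set 𝕀) (hU : IsOpen U) (hF : F.Finite) :
    IsOpen {p : Alx | p.snd ∈ U ∧ p.fst ∉ F} := by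
  refine TopologicalSpace.isOpen_generateFrom_of_mem (g := alexBasis) (Or.inr ⟨U, F, hU, hF, ?_⟩)
  ext p
  change (p.snd ∈ U ∧ p.fst ∉ F) ↔ (True ∧ p.snd ∈ U) ∧ ¬ (p.fst ∈ F ∧ True)
  tauto

lemma alx_cont {f : 𝕀 → Alx}
    (h1 : ∀ (x : 𝕀) (U : Set 𝕀), IsOpen U → x ∉ U → IsOpen {t | (f t).fst = x ∧ (f t).snd ∈ U})
    (h2 : ∀ (U F : Set 𝕀), IsOpen U → F.Finite → IsOpen {t | (f t).snd ∈ U ∧ (f t).fst ∉ F}) :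
    Continuous f := by
  refine continuous_generateFrom_iff.2 ?_
  rintro s (⟨x, U, hU, hx, rfl⟩ | ⟨U, F, hU, hF, rfl⟩)
  · exact h1 x U hU hx
  · convert h2 U F hU hF using 1
    ext t
    change (True ∧ (f t).snd ∈ U) ∧ ¬ ((f t).fst ∈ F ∧ True) ↔ ((f t).snd ∈ U ∧ (f t).fst ∉ F)
    tauto

lemma alx_cont_col (x : 𝕀) : Continuous (fun y => Alx.mk x y) := by
  refine alx_cont ?_ ?_
  · intro z U hU _
    exact IsOpen.and (isOpen_const (p := x = z)) hU
  · intro U F hU _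
    exact IsOpen.and hU (isOpen_const (p := x ∉ F))

lemma alx_cont_diag : Continuous (fun y => Alx.mk y y) := by
  refine alx_cont ?_ ?_
  · intro z U hU hz
    convert isOpen_empty using 1
    ext t
    change (t = z ∧ t ∈ U) ↔ False
    constructor
    · rintro ⟨rfl, h⟩
      exact hz h
    · exact False.elim
  · intro U F hU hF
    exact IsOpen.and hU hF.isClosed.isOpen_compl

lemma alx_cont_snd : Continuous Alx.snd := by
  refine continuous_def.2 fun U hU => ?_
  have h := alx_open_strip U ∅ hU finite_empty
  simp only [mem_empty_iff_false, not_false_eq_true, and_true] at h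
  exact h

lemma alx_diag_nhd (O : Set Alx) (hO : IsOpen O) (a : 𝕀) (ha : Alx.mk a a ∈ O) :
    ∃ U F : Set 𝕀, IsOpen U ∧ a ∈ U ∧ F.Finite ∧ ∀ p : Alx, p.snd ∈ U → p.fst ∉ F → p ∈ O := by
  have hO' : TopologicalSpace.GenerateOpen alexBasis O := hO
  clear hO
  induction hO' with
  | basic s hs =>
    rcases hs with ⟨x, U, hU, hx, rfl⟩ | ⟨U, F, hU, hF, rfl⟩
    · have h1 : a = x := ha.1
      have h2 : a ∈ U := ha.2
      exact absurd (h1 ▸ h2) hx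
    · exact ⟨U, F, hU, ha.1.2, hF, fun p h1 h2 => ⟨⟨trivial, h1⟩, fun h => h2 h.1⟩⟩
  | univ => exact ⟨univ, ∅, isOpen_univ, trivial, finite_empty, fun _ _ _ => trivial⟩
  | inter s t _ _ ih1 ih2 =>
    obtain ⟨U, F, h1, h2, h3, h4⟩ := ih1 ha.1
    obtain ⟨U', F', h1', h2', h3', h4'⟩ := ih2 ha.2
    exact ⟨U ∩ U', F ∪ F', h1.inter h1', ⟨h2, h2'⟩, h3.union h3', fun p hp hq =>
      ⟨h4 p hp.1 fun h => hq (Or.inl h), h4' p hp.2 fun h => hq (Or.inr h)⟩⟩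
  | sUnion S _ ih =>
    obtain ⟨s, hs, has⟩ := ha
    obtain ⟨U, F, h1, h2, h3, h4⟩ := ih s hs has
    exact ⟨U, F, h1, h2, h3, fun p hp hq => ⟨s, hs, h4 p hp hq⟩⟩

lemma alx_unit_not_countable : ¬ (univ : Set 𝕀).Countable := by
  intro h
  have h2 : (Icc (0 : ℝ) 1).Countable := by
    have := h.image (Subtype.val)
    rwa [image_univ, Subtype.range_coe] at this
  exact absurd (h2.measure_zero MeasureTheory.volume) (by simp)

/-- Homeomorphisms preserve the diagonal. -/
lemma alx_diag (h : Alx ≃ₜ Alx) (a : 𝕀) : (h (Alx.mk a a)).fst = (h (Alx.mk a a)).snd := by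
  by_contra hne
  set x := (h (Alx.mk a a)).fst with hx
  have hW := alx_open_col x {x}ᶜ isOpen_compl_singleton (by simp)
  obtain ⟨U, F, hU, haU, hF, hsub⟩ := alx_diag_nhd _ (hW.preimage h.continuous) a
    ⟨rfl, fun e => hne e.symm⟩
  let O : 𝕀 → Set 𝕀 := fun z => {y | (h.symm (Alx.mk x y)).fst = z ∧
    (h.symm (Alx.mk x y)).snd ∈ U ∩ {z}ᶜ}
  have hOo : ∀ z, IsOpen (O z) := fun z =>
    (alx_open_col z (U ∩ {z}ᶜ) (hU.inter isOpen_compl_singleton) (by simp)).preimage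
      (h.symm.continuous.comp (alx_cont_col x))
  have hne : ∀ z ∈ Fᶜ, (O z).Nonempty := by
    intro z hz
    obtain ⟨w, hwU, hwz⟩ : (U ∩ {z}ᶜ).Nonempty :=
      (dense_compl_singleton z).inter_open_nonempty U hU ⟨a, haU⟩
    have h1 := hsub (Alx.mk z w) hwU hz
    refine ⟨(h (Alx.mk z w)).snd, ?_⟩
    have h2 : Alx.mk x (h (Alx.mk z w)).snd = h (Alx.mk z w) := alx_ext h1.1.symm rfl
    change (h.symm (Alx.mk x _)).fst = z ∧ (h.symm (Alx.mk x _)).snd ∈ U ∩ {z}ᶜ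
    rw [h2, h.symm_apply_apply]
    exact ⟨rfl, hwU, hwz⟩
  have hd : (Fᶜ).PairwiseDisjoint O := by
    intro z _ w _ hzw
    refine Set.disjoint_left.2 fun y hy hy' => hzw (hy.1.symm.trans hy'.1)
  have hc : (Fᶜ).Countable := hd.countable_of_isOpen (fun z _ => hOo z) hne
  have := hF.countable.union hc
  rw [union_compl_self] at this
  exact alx_unit_not_countable this

lemma alx_no_half (h : Alx ≃ₜ Alx) (m : 𝕀) (hm0 : 0 < m) (hm1 : m < 1) :
    h (Alx.mk 0 0) ≠ Alx.mk m m := by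
  intro hh
  let φ : 𝕀 → 𝕀 := fun a => (h (Alx.mk a a)).snd
  have hφ : Continuous φ := alx_cont_snd.comp (h.continuous.comp alx_cont_diag)
  have hφd : ∀ a, h (Alx.mk a a) = Alx.mk (φ a) (φ a) := fun a => alx_ext (alx_diag h a) rfl
  have hsurj : ∀ b, b ≠ m → ∃ a ∈ Ioi (0 : 𝕀), φ a = b := by
    intro b hb
    have h1 := alx_diag h.symm b
    set a := (h.symm (Alx.mk b b)).snd with ha
    have h2 : h.symm (Alx.mk b b) = Alx.mk a a := alx_ext h1 rfl
    have h3 : h (Alx.mk a a) = Alx.mk b b := by rw [← h2, h.apply_symm_apply]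
    refine ⟨a, ?_, congrArg Alx.snd h3⟩
    change (0 : 𝕀) < a
    refine lt_of_le_of_ne a.2.1 ?_
    intro h0
    apply hb
    have h0' : a = 0 := h0.symm
    rw [h0', hh] at h3
    exact (congrArg Alx.snd h3).symm
  have hp : IsPreconnected (φ '' Ioi 0) := isPreconnected_Ioi.image _ hφ.continuousOn
  have hmem : m ∈ φ '' Ioi 0 :=
    hp.ordConnected.out (hsurj 0 hm0.ne) (hsurj 1 hm1.ne') ⟨hm0.le, hm1.le⟩
  obtain ⟨a, ha, ham⟩ := hmem
  have h1 : h (Alx.mk a a) = h (Alx.mk 0 0) := by rw [hφd, ham, hh]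
  have h2 : a = 0 := congrArg Alx.snd (h.injective h1)
  exact (ne_of_gt ha) h2

lemma alx_disj (h : Alx ≃ₜ Alx) (m : 𝕀) (hm0 : 0 < m) (hm1 : m < 1) (y : 𝕀) (hy : 0 < y)
    (h1 : (h (Alx.mk 0 y)).fst = m) (h2 : (h (Alx.mk 0 y)).snd ≠ m) : False := by
  have hf : Continuous fun t => h (Alx.mk 0 t) := h.continuous.comp (alx_cont_col 0)
  have hu := (alx_open_col m {m}ᶜ isOpen_compl_singleton (by simp)).preimage hf
  have hv := (alx_open_strip univ {m} isOpen_univ (finite_singleton m)).preimage hf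
  have hoff : ∀ t : 𝕀, 0 < t → (h (Alx.mk 0 t)).fst ≠ (h (Alx.mk 0 t)).snd := by
    intro t ht he
    have h3 := alx_diag h.symm (h (Alx.mk 0 t)).snd
    have h4 : Alx.mk (h (Alx.mk 0 t)).snd (h (Alx.mk 0 t)).snd = h (Alx.mk 0 t) :=
      alx_ext he.symm rfl
    rw [h4, h.symm_apply_apply] at h3
    exact ht.ne h3
  have hsub := (isPreconnected_Ioi (a := (0 : 𝕀))).subset_left_of_subset_union hu hv
    (Set.disjoint_left.2 fun t ht ht' => ht'.2 ht.1)
    (fun t ht => by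
      by_cases hc : (h (Alx.mk 0 t)).fst = m
      · exact Or.inl ⟨hc, fun e => hoff t ht (hc.trans (e : _ = m).symm)⟩
      · exact Or.inr ⟨trivial, hc⟩)
    ⟨y, hy, h1, h2⟩
  have hcl : closure (Ioi (0 : 𝕀)) ⊆ ((fun t => h (Alx.mk 0 t)) ⁻¹' {p | p.snd ∈ univ ∧ p.fst ∉ ({m} : Set 𝕀)})ᶜ :=
    closure_minimal (fun t ht ht' => ht'.2 (hsub ht).1) hv.isClosed_compl
  have h0 : (0 : 𝕀) ∈ closure (Ioi (0 : 𝕀)) := by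
    rw [closure_Ioi' ⟨1, zero_lt_one⟩]
    exact self_mem_Ici
  have h5 : (h (Alx.mk 0 0)).fst = m := by
    by_contra hc
    exact hcl h0 ⟨trivial, hc⟩
  exact alx_no_half h m hm0 hm1 (alx_ext h5 ((alx_diag h 0).symm.trans h5))

lemma alx_main (G : Subgroup (Alx ≃ₜ Alx)) :
    ∃ U V : Set Alx, IsOpen U ∧ IsOpen V ∧
      U.Nonempty ∧ V.Nonempty ∧ ∀ g ∈ G, ⇑g '' U ∩ V = ∅ := by
  obtain ⟨m, hm0, hm1⟩ := exists_between (zero_lt_one (α := 𝕀))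
  refine ⟨_, _, alx_open_col 0 (Ioi 0) isOpen_Ioi (by simp),
    alx_open_col m {m}ᶜ isOpen_compl_singleton (by simp),
    ⟨Alx.mk 0 1, rfl, (zero_lt_one : (0 : 𝕀) < 1)⟩, ⟨Alx.mk m 0, rfl, hm0.ne⟩, ?_⟩
  intro g _
  rw [eq_empty_iff_forall_notMem]
  rintro _ ⟨⟨p, ⟨hp1, hp2⟩, rfl⟩, h1, h2⟩
  have hp : p = Alx.mk 0 p.snd := alx_ext hp1 rfl
  rw [hp] at h1 h2
  exact alx_disj g m hm0 hm1 p.snd hp2 h1 h2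

/-- No subgroup of the homeomorphism group of the Alexandroff square acts topologically
transitively: there are nonempty open sets `U`, `V` with `g(U) ∩ V = ∅` for all
`g` in the subgroup. -/
theorem alexandroff_no_topologically_transitive_subgroup
    (G : Subgroup (@Homeomorph (𝕀 × 𝕀) (𝕀 × 𝕀) alexTop alexTop)) :
    ∃ U V : Set (𝕀 × 𝕀), @IsOpen _ alexTop U ∧ @IsOpen _ alexTop V ∧
      U.Nonempty ∧ V.Nonempty ∧ ∀ g ∈ G, ⇑g '' U ∩ V = ∅ := by
  exact alx_main G
end
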